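/- Let w = (w_n)_{n≥1} be a bounded sequence of nonzero scalars and 𝒜 a uniformly finitely invariant upper Furstenberg family. Then the weighted backward shift B_w is 𝒜-hypercyclic on c₀ if and only if for any p ≥ 0 and M > 0 there exists some A ∈ 𝒜 with A ⊆ [p,∞) such that (i) |w_1 w_2 ⋯ w_n| → ∞ as n → ∞ along n ∈ A, and (ii) for any n, m ∈ A with n > m, |w_1 w_2 ⋯ w_{n−m+p}| > M. -/

import Mathlib

open Filter Topology
open scoped Classical ZeroAtInfty

/-- Hereditary upward family of subsets of ℕ. -/
def HeredUp (𝒜 : Set (Set ℕ)) : Prop := ∀ A ∈ 𝒜, ∀ B : Set ℕ, A ⊆ B → B ∈ 𝒜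

/-- Finitely hereditary upward family: for every member `A` there is a finite set `F`
such that every `B ⊇ A ∩ F` belongs to the family. -/
def FinHeredUp (ℬ : Set (Set ℕ)) : Prop :=
  ∀ A ∈ ℬ, ∃ F : Finset ℕ, ∀ B : Set ℕ, A ∩ ↑F ⊆ B → B ∈ ℬ

/-- `𝒜` is an upper Furstenberg family with representation
`𝒜 = ⋃ δ ⋂ μ Adm δ μ` (where `M` is countable): a proper Furstenberg family,
each `Adm δ μ` is finitely hereditary upward, and `𝒜` is uniformly left-invariant
(note `A - n = {k | k + n ∈ A}`). -/
structure IsUpperFurstenberg {D M : Type*} (𝒜 : Set (Set ℕ))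
    (Adm : D → M → Set (Set ℕ)) : Prop where
  nonempty : 𝒜.Nonempty
  heredUp : HeredUp 𝒜
  proper : ∅ ∉ 𝒜
  countable : Countable M
  repr : 𝒜 = ⋃ δ : D, ⋂ μ : M, Adm δ μ
  finHered : ∀ δ μ, FinHeredUp (Adm δ μ)
  leftInv : ∀ A ∈ 𝒜, ∃ δ : D, ∀ n : ℕ, {k : ℕ | k + n ∈ A} ∈ ⋂ μ : M, Adm δ μ

/-- A point `x` is `𝒜`-universal for the sequence of maps `T n`. -/
def AUniv {X Y : Type*} [TopologicalSpace X] [TopologicalSpace Y]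
    (𝒜 : Set (Set ℕ)) (T : ℕ → X → Y) (x : X) : Prop :=
  ∀ V : Set Y, IsOpen V → V.Nonempty → {n : ℕ | T n x ∈ V} ∈ 𝒜

/-- The upper Furstenberg representation is uniformly finitely invariant (u.f.i.):
for every `A ∈ 𝒜` there is `δ ∈ D` with `A \ [0,n] ∈ 𝒜_δ` for all `n`. -/
def UFI {D M : Type*} (𝒜 : Set (Set ℕ)) (Adm : D → M → Set (Set ℕ)) : Prop :=
  ∀ A ∈ 𝒜, ∃ δ : D, ∀ n : ℕ, (A \ Set.Iic n) ∈ ⋂ μ : M, Adm δ μ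

/-!
Truncations of vectors of `c₀` are dense and `B_w` eventually annihilates each of them. Adding one
to a vector `y` therefore places it anywhere in the space without changing the late part of its
orbit, so a Baire category argument reduces `𝒜`-hypercyclicity to the following: for every nonempty
open `V` there is some `y` whose set of return times to `V` belongs to `𝒜`.

Write `W n = w₁ ⋯ wₙ`. As `W j (B_wⁿ y)_j = W (n + j) y_{n + j}`, a vector `v` supported in `[0, p]`
is approximated at all times `n ∈ A` by letting `W i y_i` be the superposition of the translates of
`(W k v_k)_k` by the elements of `A`. After replacing `A` by `A - p`, boundedness of `w` extends
conditions (i) and (ii) from `W (n + p)` and `W (n - m + p)` to `W (n + j)` and `W (n - m + j)` for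
all `j ≤ p`. Then (i) puts `y` in `c₀`, and (ii) keeps the translates disjoint and makes what later
translates contribute to `B_wⁿ y` small. Conversely, (i) and (ii) hold along the times at which an
`𝒜`-hypercyclic orbit is close to a large multiple of the indicator sequence of `[0, p]`.
-/

theorem FinHeredUp.heredUp {ℬ : Set (Set ℕ)} (h : FinHeredUp ℬ) : HeredUp ℬ := fun A hA _ hAB =>
  let ⟨_, hF⟩ := h A hA
  hF _ (Set.inter_subset_left.trans hAB)

theorem FinHeredUp.isOpen_setOf_mem {X Y : Type*} [TopologicalSpace X] [TopologicalSpace Y]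
    {ℬ : Set (Set ℕ)} (h : FinHeredUp ℬ) {T : ℕ → X → Y} (hT : ∀ n, Continuous (T n)) {V : Set Y}
    (hV : IsOpen V) : IsOpen {x | {n | T n x ∈ V} ∈ ℬ} := by
  refine isOpen_iff_mem_nhds.2 fun x hx => ?_
  obtain ⟨F, hF⟩ := h _ hx
  have hnear : ∀ᶠ y in 𝓝 x, ∀ n ∈ F, T n x ∈ V → T n y ∈ V :=
    (Filter.eventually_all_finset F).2 fun n _ =>
      eventually_imp_distrib_left.2 fun hn => (hT n).continuousAt.eventually_mem (hV.mem_nhds hn)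
  filter_upwards [hnear] with y hy
  exact hF _ fun n hn => hy n hn.2 hn.1

namespace IsUpperFurstenberg

variable {D M : Type*} {𝒜 : Set (Set ℕ)} {Adm : D → M → Set (Set ℕ)}

theorem mem_of_mem_iInter (h : IsUpperFurstenberg 𝒜 Adm) {A : Set ℕ} {δ : D}
    (hA : A ∈ ⋂ μ, Adm δ μ) : A ∈ 𝒜 :=
  h.repr ▸ Set.mem_iUnion_of_mem δ hA

theorem preimage_add_mem (h : IsUpperFurstenberg 𝒜 Adm) {A : Set ℕ} (hA : A ∈ 𝒜) (p : ℕ) :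
    {k | k + p ∈ A} ∈ 𝒜 :=
  let ⟨_, hδ⟩ := h.leftInv A hA
  h.mem_of_mem_iInter (hδ p)

theorem diff_Iic_mem (h : IsUpperFurstenberg 𝒜 Adm) (hufi : UFI 𝒜 Adm) {A : Set ℕ} (hA : A ∈ 𝒜)
    (p : ℕ) : A \ Set.Iic p ∈ 𝒜 :=
  let ⟨_, hδ⟩ := hufi A hA
  h.mem_of_mem_iInter (hδ p)

section Baire

variable {X Y : Type*} [TopologicalSpace X] [BaireSpace X] [TopologicalSpace Y]
  [SecondCountableTopology Y]

theorem dense_aUniv (h : IsUpperFurstenberg 𝒜 Adm) {T : ℕ → X → Y} (hT : ∀ n, Continuous (T n))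
    (hV : ∀ V : Set Y, IsOpen V → V.Nonempty → ∃ δ, ∀ U : Set X, IsOpen U → U.Nonempty →
      ∃ x ∈ U, {n | T n x ∈ V} ∈ ⋂ μ, Adm δ μ) :
    Dense {x | AUniv 𝒜 T x} := by
  have := h.countable
  let b := TopologicalSpace.countableBasis Y
  have hb : TopologicalSpace.IsTopologicalBasis b := TopologicalSpace.isBasis_countableBasis Y
  have : Countable b := (TopologicalSpace.countable_countableBasis Y).to_subtype
  choose δ hδ using fun V : b =>
    hV V (hb.isOpen V.2) (TopologicalSpace.nonempty_of_mem_countableBasis V.2)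
  have hdense : Dense (⋂ i : b × M, {x | {n | T n x ∈ i.1.1} ∈ Adm (δ i.1) i.2}) := by
    refine dense_iInter_of_isOpen
      (fun i => (h.finHered _ _).isOpen_setOf_mem hT (hb.isOpen i.1.2)) fun i => ?_
    refine dense_iff_inter_open.2 fun U hU hUne => ?_
    obtain ⟨x, hxU, hx⟩ := hδ i.1 U hU hUne
    exact ⟨x, hxU, Set.mem_iInter.1 hx i.2⟩
  refine hdense.mono fun x hx V hV ⟨y, hy⟩ => ?_
  obtain ⟨V', hV', -, hsub⟩ := hb.exists_subset_of_mem_open hy hV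
  refine h.heredUp _ (h.mem_of_mem_iInter (δ := δ ⟨V', hV'⟩) ?_) _ fun n hn => hsub hn
  exact Set.mem_iInter.2 fun μ => Set.mem_iInter.1 hx (⟨V', hV'⟩, μ)

theorem dense_aUniv_of_ufi (h : IsUpperFurstenberg 𝒜 Adm) (hufi : UFI 𝒜 Adm) {T : ℕ → X → Y}
    (hT : ∀ n, Continuous (T n))
    (hV : ∀ V : Set Y, IsOpen V → V.Nonempty → ∃ A ∈ 𝒜, ∀ U : Set X, IsOpen U → U.Nonempty →
      ∃ x ∈ U, ∃ N, ∀ n ∈ A, N < n → T n x ∈ V) :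
    Dense {x | AUniv 𝒜 T x} := by
  refine h.dense_aUniv hT fun V hVo hVne => ?_
  obtain ⟨A, hA, hAV⟩ := hV V hVo hVne
  obtain ⟨δ, hδ⟩ := hufi A hA
  refine ⟨δ, fun U hUo hUne => ?_⟩
  obtain ⟨x, hxU, N, hx⟩ := hAV U hUo hUne
  refine ⟨x, hxU, Set.mem_iInter.2 fun μ => ?_⟩
  exact (h.finHered δ μ).heredUp _ (Set.mem_iInter.1 (hδ N) μ) _
    fun n hn => hx n hn.1 (not_le.1 hn.2)

end Baire

theorem dense_aUniv_iterate_of_dense_eventually_eq_zero {X F : Type*} [AddGroup X]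
    [TopologicalSpace X] [ContinuousAdd X] [BaireSpace X] [SecondCountableTopology X]
    [FunLike F X X] [AddMonoidHomClass F X X] (h : IsUpperFurstenberg 𝒜 Adm) (hufi : UFI 𝒜 Adm)
    {T : F} (hT : Continuous T) (hzero : Dense {z | ∀ᶠ n in atTop, T^[n] z = 0})
    (hV : ∀ V : Set X, IsOpen V → V.Nonempty → ∃ y, {n | T^[n] y ∈ V} ∈ 𝒜) :
    Dense {x | AUniv 𝒜 (fun n => T^[n]) x} := by
  refine h.dense_aUniv_of_ufi hufi hT.iterate fun V hVo hVne => ?_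
  obtain ⟨y, hy⟩ := hV V hVo hVne
  refine ⟨_, hy, fun U hUo ⟨u, hu⟩ => ?_⟩
  obtain ⟨z, hzU, hz⟩ := hzero.inter_open_nonempty ((y + ·) ⁻¹' U)
    (hUo.preimage (continuous_const_add y)) ⟨-y + u, by simpa using hu⟩
  obtain ⟨N, hN⟩ := eventually_atTop.1 hz
  refine ⟨y + z, hzU, N, fun n hn hNn => ?_⟩
  rwa [iterate_map_add, hN n hNn.le, add_zero]

end IsUpperFurstenberg

theorem zeroAtInfty_dist_le_iff {α β : Type*} [TopologicalSpace α] [PseudoMetricSpace β] [Zero β]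
    {f g : C₀(α, β)} {c : ℝ} (hc : 0 ≤ c) : dist f g ≤ c ↔ ∀ a, dist (f a) (g a) ≤ c := by
  rw [← ZeroAtInftyContinuousMap.dist_toBCF_eq_dist]
  exact BoundedContinuousFunction.dist_le hc

theorem zeroAtInfty_dist_apply_le {α β : Type*} [TopologicalSpace α] [PseudoMetricSpace β] [Zero β]
    (f g : C₀(α, β)) (a : α) : dist (f a) (g a) ≤ dist f g :=
  (zeroAtInfty_dist_le_iff dist_nonneg).1 le_rfl a

namespace NullSeq

section Topological

variable {E : Type*} [TopologicalSpace E] [Zero E]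

theorem tendsto_zero (x : C₀(ℕ, E)) : Tendsto x atTop (𝓝 0) := by
  have h := x.zero_at_infty'
  rwa [Filter.cocompact_eq_cofinite, Nat.cofinite_eq_atTop] at h

/-- A sequence converging to zero, as an element of the space `C₀(ℕ, E)`, which encodes `c₀`. -/
def ofTendsto (f : ℕ → E) (hf : Tendsto f atTop (𝓝 0)) : C₀(ℕ, E) where
  toFun := f
  continuous_toFun := continuous_of_discreteTopology
  zero_at_infty' := by rwa [Filter.cocompact_eq_cofinite, Nat.cofinite_eq_atTop]

/-- The element of `c₀` that agrees with `f` on the closed interval `[0, p]` and vanishes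
beyond it. -/
noncomputable def truncate (p : ℕ) (f : ℕ → E) : C₀(ℕ, E) :=
  ofTendsto ((Set.Iic p).indicator f) <| tendsto_const_nhds.congr' <| by
    filter_upwards [eventually_gt_atTop p] with n hn
    exact (Set.indicator_of_notMem (Set.notMem_Iic.2 hn) f).symm

theorem truncate_apply_of_le {p n : ℕ} (h : n ≤ p) (f : ℕ → E) : truncate p f n = f n :=
  Set.indicator_of_mem (Set.mem_Iic.2 h) f

theorem truncate_apply_of_lt {p n : ℕ} (h : p < n) (f : ℕ → E) : truncate p f n = 0 :=
  Set.indicator_of_notMem (Set.notMem_Iic.2 h) f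

end Topological

variable {E : Type*} [PseudoMetricSpace E] [Zero E]

theorem tendsto_truncate (x : C₀(ℕ, E)) : Tendsto (fun p => truncate p x) atTop (𝓝 x) := by
  refine Metric.tendsto_atTop.2 fun ε hε => ?_
  obtain ⟨N, hN⟩ := Metric.tendsto_atTop.1 (tendsto_zero x) (ε / 2) (half_pos hε)
  refine ⟨N, fun p hp => lt_of_le_of_lt ?_ (half_lt_self hε)⟩
  refine (zeroAtInfty_dist_le_iff (half_pos hε).le).2 fun n => ?_
  rcases le_or_gt n p with hn | hn
  · simpa only [truncate_apply_of_le hn, dist_self] using (half_pos hε).le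
  · simpa only [truncate_apply_of_lt hn, dist_comm] using (hN n (by omega)).le

theorem continuous_truncate (p : ℕ) : Continuous (truncate p : (ℕ → E) → C₀(ℕ, E)) := by
  refine Metric.continuous_iff'.2 fun f ε hε => ?_
  have hnear : ∀ᶠ g in 𝓝 f, ∀ n ∈ Finset.Iic p, dist (g n) (f n) < ε / 2 :=
    (Filter.eventually_all_finset _).2 fun n _ =>
      (continuous_apply (A := fun _ => E) n).continuousAt.eventually_mem
        (Metric.ball_mem_nhds (f n) (half_pos hε))
  filter_upwards [hnear] with g hg
  refine lt_of_le_of_lt ?_ (half_lt_self hε)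
  refine (zeroAtInfty_dist_le_iff (half_pos hε).le).2 fun n => ?_
  rcases le_or_gt n p with hn | hn
  · simpa only [truncate_apply_of_le hn] using (hg n (Finset.mem_Iic.2 hn)).le
  · simpa only [truncate_apply_of_lt hn, dist_self] using (half_pos hε).le

theorem separableSpace [TopologicalSpace.SeparableSpace E] :
    TopologicalSpace.SeparableSpace C₀(ℕ, E) := by
  have hsep : TopologicalSpace.IsSeparable
      (⋃ p, Set.range (truncate p : (ℕ → E) → C₀(ℕ, E))) :=
    .iUnion fun p => TopologicalSpace.isSeparable_range (continuous_truncate p)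
  refine TopologicalSpace.isSeparable_univ_iff.1 (hsep.closure.mono fun x _ => ?_)
  exact mem_closure_of_tendsto (tendsto_truncate x)
    (.of_forall fun p => Set.mem_iUnion_of_mem p ⟨x, rfl⟩)

end NullSeq

section TranslateSum

/-- The superposition `i ↦ ∑_{n ∈ A, n ≤ i} a (i - n)` of the translates of the sequence `a` by the
elements of `A`. When `a` is supported in `[0, p]` and distinct elements of `A` differ by more
than `p`, these translates have disjoint supports. -/
noncomputable def translateSum {E : Type*} [AddCommMonoid E] (A : Set ℕ) (a : ℕ → E) (i : ℕ) : E :=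
  ∑ n ∈ Finset.range (i + 1) with n ∈ A, a (i - n)

variable {E : Type*} [AddCommMonoid E] {A : Set ℕ} {a : ℕ → E} {p : ℕ}

theorem translateSum_add_of_mem (hA : ∀ n ∈ A, ∀ m ∈ A, m < n → m + p < n)
    (ha : ∀ k, p < k → a k = 0) {n j : ℕ} (hn : n ∈ A) (hj : j ≤ p) :
    translateSum A a (n + j) = a j := by
  rw [translateSum, Finset.sum_eq_single_of_mem n (by simp [hn]), Nat.add_sub_cancel_left]
  intro m hm hmn
  obtain ⟨hmj, hmA⟩ := Finset.mem_filter.1 hm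
  refine ha _ ?_
  rcases lt_or_gt_of_ne hmn with h | h
  · have := hA n hn m hmA h
    omega
  · have := hA m hmA n hn h
    have := Finset.mem_range.1 hmj
    omega

theorem translateSum_eq_zero_or (hA : ∀ n ∈ A, ∀ m ∈ A, m < n → m + p < n)
    (ha : ∀ k, p < k → a k = 0) (i : ℕ) :
    translateSum A a i = 0 ∨ ∃ n ∈ A, ∃ j ≤ p, i = n + j ∧ translateSum A a i = a j := by
  by_cases h : ∃ n ∈ A, ∃ j ≤ p, i = n + j
  · obtain ⟨n, hn, j, hj, rfl⟩ := h
    exact .inr ⟨n, hn, j, hj, rfl, translateSum_add_of_mem hA ha hn hj⟩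
  · refine .inl (Finset.sum_eq_zero fun n hn => ha _ (not_le.1 fun hle => h ?_))
    obtain ⟨hni, hnA⟩ := Finset.mem_filter.1 hn
    exact ⟨n, hnA, i - n, hle, (Nat.add_sub_of_le (Finset.mem_range_succ_iff.1 hni)).symm⟩

theorem tendsto_translateSum_div {𝕜 : Type*} [NormedField 𝕜] {a b : ℕ → 𝕜}
    (hA : ∀ n ∈ A, ∀ m ∈ A, m < n → m + p < n) (ha : ∀ k, p < k → a k = 0)
    (hb : ∀ j ≤ p, Tendsto (fun n => ‖b (n + j)‖) (atTop ⊓ 𝓟 A) atTop) :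
    Tendsto (fun i => translateSum A a i / b i) atTop (𝓝 0) := by
  refine Metric.tendsto_atTop.2 fun ε hε => ?_
  have hsmall : ∀ᶠ n in atTop ⊓ 𝓟 A, ∀ j ∈ Finset.Iic p, ‖a j‖ / ‖b (n + j)‖ < ε :=
    (Filter.eventually_all_finset _).2 fun j hj =>
      ((hb j (Finset.mem_Iic.1 hj)).const_div_atTop ‖a j‖).eventually_lt_const hε
  obtain ⟨N, hN⟩ := eventually_atTop.1 (eventually_inf_principal.1 hsmall)
  refine ⟨N + p, fun i hi => ?_⟩
  rcases translateSum_eq_zero_or hA ha i with h | ⟨n, hn, j, hj, rfl, h⟩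
  · simpa only [h, zero_div, dist_self] using hε
  · simpa only [h, dist_zero_right, norm_div] using hN n (by omega) hn j (Finset.mem_Iic.2 hj)

end TranslateSum

section WeightProd

variable {𝕜 : Type*} [NormedField 𝕜] {w : ℕ → 𝕜}

/-- The product `w₁ ⋯ wₙ` of the first `n` weights; the value `w 0` does not enter. -/
def weightProd (w : ℕ → 𝕜) (n : ℕ) : 𝕜 := ∏ ν ∈ Finset.Icc 1 n, w ν

theorem weightProd_zero (w : ℕ → 𝕜) : weightProd w 0 = 1 := by
  simp [weightProd]

theorem weightProd_succ (w : ℕ → 𝕜) (n : ℕ) : weightProd w (n + 1) = weightProd w n * w (n + 1) :=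
  Finset.prod_Icc_succ_top (Nat.le_add_left 1 n) w

theorem weightProd_ne_zero (hw : ∀ n, 1 ≤ n → w n ≠ 0) (n : ℕ) : weightProd w n ≠ 0 :=
  Finset.prod_ne_zero_iff.2 fun i hi => hw i (Finset.mem_Icc.1 hi).1

theorem norm_weightProd_add_le {C : ℝ} (hC : ∀ n, ‖w (n + 1)‖ ≤ C) (a b : ℕ) :
    ‖weightProd w (a + b)‖ ≤ ‖weightProd w a‖ * C ^ b := by
  have hC0 : 0 ≤ C := (norm_nonneg _).trans (hC 0)
  induction b with
  | zero => simp
  | succ b ih =>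
    rw [← add_assoc, weightProd_succ, norm_mul, pow_succ, ← mul_assoc]
    exact mul_le_mul ih (hC _) (norm_nonneg _) (by positivity)

theorem norm_weightProd_add_le_mul_pow {C : ℝ} (hC1 : 1 ≤ C) (hC : ∀ n, ‖w (n + 1)‖ ≤ C)
    (n : ℕ) {j p : ℕ} (hj : j ≤ p) : ‖weightProd w (n + p)‖ ≤ ‖weightProd w (n + j)‖ * C ^ p := by
  obtain ⟨k, rfl⟩ := Nat.exists_eq_add_of_le hj
  rw [← add_assoc]
  refine (norm_weightProd_add_le hC _ k).trans ?_
  gcongr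
  exact Nat.le_add_left k j

theorem add_lt_of_lt_norm_weightProd {C : ℝ} (hC1 : 1 ≤ C) (hC : ∀ n, ‖w (n + 1)‖ ≤ C)
    {n m p : ℕ} (hmn : m < n) (h : C ^ p < ‖weightProd w (n - m)‖) : m + p < n := by
  have hle : ‖weightProd w (n - m)‖ ≤ C ^ (n - m) := by
    simpa only [zero_add, weightProd_zero, norm_one, one_mul]
      using norm_weightProd_add_le hC 0 (n - m)
  have hlt : p < n - m := lt_of_not_ge fun hge =>
    (h.trans_le hle).not_ge (pow_le_pow_right₀ hC1 hge)
  omega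

theorem tendsto_norm_weightProd_add {C : ℝ} (hC1 : 1 ≤ C) (hC : ∀ n, ‖w (n + 1)‖ ≤ C)
    {A : Set ℕ} (hA : Tendsto (fun n => ‖weightProd w n‖) (atTop ⊓ 𝓟 A) atTop) {j p : ℕ}
    (hj : j ≤ p) :
    Tendsto (fun n => ‖weightProd w (n + j)‖) (atTop ⊓ 𝓟 {k | k + p ∈ A}) atTop := by
  have hshift : Tendsto (· + p) (atTop ⊓ 𝓟 {k | k + p ∈ A}) (atTop ⊓ 𝓟 A) :=
    (tendsto_add_atTop_nat p).inf (tendsto_principal_principal.2 fun _ hk => hk)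
  have hCp : 0 < C ^ p := by positivity
  refine tendsto_atTop_mono (fun n => ?_) ((hA.comp hshift).atTop_div_const hCp)
  exact (div_le_iff₀ hCp).2 (norm_weightProd_add_le_mul_pow hC1 hC n hj)

theorem IsUpperFurstenberg.exists_mem_forall_lt_norm_weightProd {D M : Type*} {𝒜 : Set (Set ℕ)}
    {Adm : D → M → Set (Set ℕ)} (h : IsUpperFurstenberg 𝒜 Adm) {C : ℝ} (hC1 : 1 ≤ C)
    (hC : ∀ n, ‖w (n + 1)‖ ≤ C) {p : ℕ}
    (hp : ∀ K : ℝ, 0 < K → ∃ A ∈ 𝒜,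
      Tendsto (fun n => ‖weightProd w n‖) (atTop ⊓ 𝓟 A) atTop ∧
      ∀ n ∈ A, ∀ m ∈ A, m < n → K < ‖weightProd w (n - m + p)‖)
    {K : ℝ} (hK : 0 < K) :
    ∃ A ∈ 𝒜, (∀ j ≤ p, Tendsto (fun n => ‖weightProd w (n + j)‖) (atTop ⊓ 𝓟 A) atTop) ∧
      ∀ n ∈ A, ∀ m ∈ A, m < n → ∀ j ≤ p, K < ‖weightProd w (n - m + j)‖ := by
  have hCp : 0 < C ^ p := by positivity
  obtain ⟨A, hA, hAt, hAK⟩ := hp (K * C ^ p) (by positivity)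
  refine ⟨{k | k + p ∈ A}, h.preimage_add_mem hA p,
    fun j hj => tendsto_norm_weightProd_add hC1 hC hAt hj, fun n hn m hm hmn j hj => ?_⟩
  have hlt := hAK (n + p) hn (m + p) hm (by omega)
  rw [Nat.add_sub_add_right] at hlt
  exact lt_of_mul_lt_mul_right
    (hlt.trans_le (norm_weightProd_add_le_mul_pow hC1 hC (n - m) hj)) hCp.le

end WeightProd

/-- `B` is the weighted backward shift `B_w` on `c₀`. It is given by its action on coordinates, as
for an unbounded `w` this action need not preserve `c₀`. -/
def IsWeightedBackwardShift {𝕜 : Type*} [NormedField 𝕜] (w : ℕ → 𝕜)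
    (B : C₀(ℕ, 𝕜) → C₀(ℕ, 𝕜)) : Prop :=
  ∀ x n, B x n = w (n + 1) * x (n + 1)

namespace IsWeightedBackwardShift

section NormedField

variable {𝕜 : Type*} [NormedField 𝕜] {w : ℕ → 𝕜} {B : C₀(ℕ, 𝕜) → C₀(ℕ, 𝕜)}

theorem weightProd_mul_iterate_apply (hB : IsWeightedBackwardShift w B) (n : ℕ) (x : C₀(ℕ, 𝕜))
    (j : ℕ) : weightProd w j * B^[n] x j = weightProd w (n + j) * x (n + j) := by
  induction n generalizing j with
  | zero => simp
  | succ n ih =>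
    rw [Function.iterate_succ_apply', hB, ← mul_assoc, ← weightProd_succ, ih (j + 1),
      Nat.succ_add_eq_add_succ]

theorem iterate_eq_zero (hB : IsWeightedBackwardShift w B) {n : ℕ} {x : C₀(ℕ, 𝕜)}
    (hx : ∀ j, n ≤ j → x j = 0) : B^[n] x = 0 := by
  induction n generalizing x with
  | zero => exact ZeroAtInftyContinuousMap.ext fun j => hx j (Nat.zero_le j)
  | succ n ih => exact ih fun j hj => by rw [hB, hx (j + 1) (Nat.succ_le_succ hj), mul_zero]

theorem dense_eventually_iterate_eq_zero (hB : IsWeightedBackwardShift w B) :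
    Dense {z | ∀ᶠ n in atTop, B^[n] z = 0} := fun x =>
  mem_closure_of_tendsto (NullSeq.tendsto_truncate x) <| .of_forall fun p =>
    (eventually_gt_atTop p).mono fun _ hn =>
      hB.iterate_eq_zero fun _ hj => NullSeq.truncate_apply_of_lt (hn.trans_le hj) x

theorem tendsto_norm_weightProd (hB : IsWeightedBackwardShift w B) (x : C₀(ℕ, 𝕜)) {A : Set ℕ}
    (hA : ∀ n ∈ A, 1 ≤ ‖B^[n] x 0‖) :
    Tendsto (fun n => ‖weightProd w n‖) (atTop ⊓ 𝓟 A) atTop := by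
  have hprod : ∀ n ∈ A, 1 ≤ ‖weightProd w n‖ * ‖x n‖ := fun n hn => by
    have h := hB.weightProd_mul_iterate_apply n x 0
    rw [weightProd_zero, one_mul, add_zero] at h
    simpa only [h, norm_mul] using hA n hn
  have hpos : ∀ n ∈ A, 0 < ‖x n‖ := fun n hn =>
    pos_of_mul_pos_right (one_pos.trans_le (hprod n hn)) (norm_nonneg _)
  have hx : Tendsto (fun n => ‖x n‖) (atTop ⊓ 𝓟 A) (𝓝[>] 0) :=
    tendsto_nhdsWithin_iff.2 ⟨by simpa using (NullSeq.tendsto_zero x).norm.mono_left inf_le_left,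
      eventually_inf_principal.2 (.of_forall hpos)⟩
  refine tendsto_atTop_mono' _ (eventually_inf_principal.2 (.of_forall fun n hn => ?_))
    hx.inv_tendsto_nhdsGT_zero
  exact (inv_le_iff_one_le_mul₀ (hpos n hn)).2 (hprod n hn)

theorem lt_norm_weightProd (hB : IsWeightedBackwardShift w B) {x : C₀(ℕ, 𝕜)} {K : ℝ} {n m p : ℕ}
    (hmn : m ≤ n) (hn : K < ‖weightProd w p * B^[n] x p‖)
    (hm : ‖B^[m] x (n - m + p)‖ ≤ 1) : K < ‖weightProd w (n - m + p)‖ := by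
  rw [← Nat.sub_add_cancel hmn, Function.iterate_add_apply,
    hB.weightProd_mul_iterate_apply, norm_mul] at hn
  exact hn.trans_le (mul_le_of_le_one_right (norm_nonneg _) (by simpa using hm))

theorem exists_forall_mem_dist_iterate_le (hB : IsWeightedBackwardShift w B)
    (hw : ∀ n, 1 ≤ n → w n ≠ 0) {A : Set ℕ} {p : ℕ} (hA : ∀ n ∈ A, ∀ m ∈ A, m < n → m + p < n)
    (hAt : ∀ j ≤ p, Tendsto (fun n => ‖weightProd w (n + j)‖) (atTop ⊓ 𝓟 A) atTop)
    {K : ℝ} (hAK : ∀ n ∈ A, ∀ m ∈ A, m < n → ∀ j ≤ p, K < ‖weightProd w (n - m + j)‖)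
    {v : C₀(ℕ, 𝕜)} (hv : ∀ k, p < k → v k = 0) {ε : ℝ} (hε : 0 ≤ ε)
    (hvK : ∀ k ≤ p, ‖weightProd w k * v k‖ ≤ ε * K) :
    ∃ y, ∀ n ∈ A, dist (B^[n] y) v ≤ ε := by
  let a : ℕ → 𝕜 := fun k => weightProd w k * v k
  have ha : ∀ k, p < k → a k = 0 := fun k hk => by simp only [a, hv k hk, mul_zero]
  let y := NullSeq.ofTendsto _ (tendsto_translateSum_div hA ha hAt)
  refine ⟨y, fun n hn => (zeroAtInfty_dist_le_iff hε).2 fun j => ?_⟩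
  have horbit : weightProd w j * B^[n] y j = translateSum A a (n + j) :=
    (hB.weightProd_mul_iterate_apply n y j).trans (mul_div_cancel₀ _ (weightProd_ne_zero hw _))
  rcases le_or_gt j p with hj | hj
  · rw [translateSum_add_of_mem hA ha hn hj] at horbit
    rw [mul_left_cancel₀ (weightProd_ne_zero hw j) horbit, dist_self]
    exact hε
  rw [hv j hj, dist_zero_right]
  have hWj : 0 < ‖weightProd w j‖ := norm_pos_iff.2 (weightProd_ne_zero hw j)
  refine le_of_mul_le_mul_left ?_ hWj
  rw [← norm_mul, horbit]
  rcases translateSum_eq_zero_or hA ha (n + j) with h | ⟨m, hm, k, hk, hmk, h⟩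
  · rw [h, norm_zero]
    positivity
  · have hnm : n < m := by
      by_contra! hle
      rcases hle.eq_or_lt with rfl | hlt
      · omega
      · have := hA n hn m hm hlt
        omega
    have hKj : K < ‖weightProd w j‖ := by
      have := hAK m hm n hn hnm k hk
      rwa [show m - n + k = j by omega] at this
    calc ‖translateSum A a (n + j)‖ ≤ ε * K := h ▸ hvK k hk
      _ ≤ ε * ‖weightProd w j‖ := by gcongr
      _ = ‖weightProd w j‖ * ε := mul_comm _ _

theorem exists_return_times_mem (hB : IsWeightedBackwardShift w B) (hw : ∀ n, 1 ≤ n → w n ≠ 0)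
    {C : ℝ} (hC1 : 1 ≤ C) (hC : ∀ n, ‖w (n + 1)‖ ≤ C) {D M : Type*} {𝒜 : Set (Set ℕ)}
    {Adm : D → M → Set (Set ℕ)} (h : IsUpperFurstenberg 𝒜 Adm)
    (hA : ∀ p : ℕ, ∀ K : ℝ, 0 < K → ∃ A ∈ 𝒜,
      Tendsto (fun n => ‖weightProd w n‖) (atTop ⊓ 𝓟 A) atTop ∧
      ∀ n ∈ A, ∀ m ∈ A, m < n → K < ‖weightProd w (n - m + p)‖)
    {V : Set C₀(ℕ, 𝕜)} (hV : IsOpen V) (hVne : V.Nonempty) : ∃ y, {n | B^[n] y ∈ V} ∈ 𝒜 := by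
  obtain ⟨v, hv⟩ := hVne
  obtain ⟨p, hp⟩ : ∃ p, NullSeq.truncate p v ∈ V :=
    ((NullSeq.tendsto_truncate v).eventually_mem (hV.mem_nhds hv)).exists
  obtain ⟨ε, hε, hεV⟩ := Metric.nhds_basis_closedBall.mem_iff.1 (hV.mem_nhds hp)
  let a : ℕ → 𝕜 := fun k => weightProd w k * NullSeq.truncate p v k
  let K := max (C ^ p) ((∑ k ∈ Finset.Iic p, ‖a k‖) / ε)
  have hK : 0 < K := lt_max_of_lt_left (by positivity)
  have haK : ∀ k ≤ p, ‖a k‖ ≤ ε * K := fun k hk =>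
    (Finset.single_le_sum (fun _ _ => norm_nonneg _) (Finset.mem_Iic.2 hk)).trans
      ((div_le_iff₀' hε).1 (le_max_right _ _))
  obtain ⟨A, hA𝒜, hAt, hAK⟩ := h.exists_mem_forall_lt_norm_weightProd hC1 hC (hA p) hK
  have hspaced : ∀ n ∈ A, ∀ m ∈ A, m < n → m + p < n := fun n hn m hm hmn =>
    add_lt_of_lt_norm_weightProd hC1 hC hmn
      ((le_max_left _ _).trans_lt (hAK n hn m hm hmn 0 (Nat.zero_le p)))
  obtain ⟨y, hy⟩ := hB.exists_forall_mem_dist_iterate_le hw hspaced hAt hAK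
    (fun k hk => NullSeq.truncate_apply_of_lt hk v) hε.le haK
  exact ⟨y, h.heredUp A hA𝒜 _ fun n hn => hεV (hy n hn)⟩

end NormedField

section NontriviallyNormedField

variable {𝕜 : Type*} [NontriviallyNormedField 𝕜] {w : ℕ → 𝕜}

theorem norm_weight_le_opNorm {B : C₀(ℕ, 𝕜) →L[𝕜] C₀(ℕ, 𝕜)} (hB : IsWeightedBackwardShift w B)
    (n : ℕ) : ‖w (n + 1)‖ ≤ ‖B‖ := by
  let e : C₀(ℕ, 𝕜) := NullSeq.truncate (n + 1) 1
  have he : ‖e‖ ≤ 1 := by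
    rw [← dist_zero_right]
    refine (zeroAtInfty_dist_le_iff zero_le_one).2 fun k => ?_
    rcases le_or_gt k (n + 1) with hk | hk
    · simp [e, NullSeq.truncate_apply_of_le hk]
    · simp [e, NullSeq.truncate_apply_of_lt hk]
  calc ‖w (n + 1)‖ = dist (B e n) ((0 : C₀(ℕ, 𝕜)) n) := by
        simp [hB e n, e, NullSeq.truncate_apply_of_le]
    _ ≤ ‖B e‖ := (zeroAtInfty_dist_apply_le _ _ n).trans_eq (dist_zero_right _)
    _ ≤ ‖B‖ := B.unit_le_opNorm e he

theorem exists_mem_of_aUniv {B : C₀(ℕ, 𝕜) → C₀(ℕ, 𝕜)} (hB : IsWeightedBackwardShift w B)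
    (hw : ∀ n, 1 ≤ n → w n ≠ 0) {D M : Type*} {𝒜 : Set (Set ℕ)} {Adm : D → M → Set (Set ℕ)}
    (h : IsUpperFurstenberg 𝒜 Adm) (hufi : UFI 𝒜 Adm) {x : C₀(ℕ, 𝕜)}
    (hx : AUniv 𝒜 (fun n => B^[n]) x) (p : ℕ) (K : ℝ) :
    ∃ A ∈ 𝒜, (∀ n ∈ A, p ≤ n) ∧
      Tendsto (fun n => ‖weightProd w n‖) (atTop ⊓ 𝓟 A) atTop ∧
      ∀ n ∈ A, ∀ m ∈ A, m < n → K < ‖weightProd w (n - m + p)‖ := by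
  have hWp : 0 < ‖weightProd w p‖ := norm_pos_iff.2 (weightProd_ne_zero hw p)
  obtain ⟨c, hc⟩ := NormedField.exists_lt_norm 𝕜 (max 1 (K / ‖weightProd w p‖) + 1)
  let f : C₀(ℕ, 𝕜) := NullSeq.truncate p fun _ => c
  let A : Set ℕ := {n | B^[n] x ∈ Metric.ball f 1}
  have hA : A ∈ 𝒜 := hx _ Metric.isOpen_ball (Metric.nonempty_ball.2 one_pos)
  have hnear : ∀ n ∈ A, ∀ j, dist (B^[n] x j) (f j) < 1 := fun n hn j =>
    (zeroAtInfty_dist_apply_le _ _ j).trans_lt hn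
  have hlarge : ∀ n ∈ A, ∀ j ≤ p, max 1 (K / ‖weightProd w p‖) < ‖B^[n] x j‖ := by
    intro n hn j hj
    have hdist := hnear n hn j
    rw [NullSeq.truncate_apply_of_le hj, dist_eq_norm'] at hdist
    linarith [norm_le_norm_add_norm_sub' c (B^[n] x j)]
  have hsmall : ∀ n ∈ A, ∀ j, p < j → ‖B^[n] x j‖ ≤ 1 := fun n hn j hj => by
    simpa only [f, NullSeq.truncate_apply_of_lt hj, dist_zero_right] using (hnear n hn j).le
  refine ⟨A \ Set.Iic p, h.diff_Iic_mem hufi hA p, fun n hn => (not_le.1 hn.2).le,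
    hB.tendsto_norm_weightProd x fun n hn =>
      (le_max_left _ _).trans (hlarge n hn.1 0 (Nat.zero_le p)).le,
    fun n hn m hm hmn => ?_⟩
  refine hB.lt_norm_weightProd hmn.le ?_ (hsmall m hm.1 _ (by omega))
  rw [norm_mul]
  exact (div_lt_iff₀' hWp).1 ((le_max_right _ _).trans_lt (hlarge n hn.1 p le_rfl))

end NontriviallyNormedField

end IsWeightedBackwardShift

theorem weightedShift_AHypercyclic_iff_c₀_general {𝕜 : Type*} [NontriviallyNormedField 𝕜]
    [CompleteSpace 𝕜] [TopologicalSpace.SeparableSpace 𝕜] {w : ℕ → 𝕜}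
    (hw : ∀ n, 1 ≤ n → w n ≠ 0) {B : C₀(ℕ, 𝕜) →L[𝕜] C₀(ℕ, 𝕜)}
    (hB : IsWeightedBackwardShift w B) {D M : Type*} {𝒜 : Set (Set ℕ)}
    {Adm : D → M → Set (Set ℕ)} (h : IsUpperFurstenberg 𝒜 Adm) (hufi : UFI 𝒜 Adm) :
    (∃ x, AUniv 𝒜 (fun n => B^[n]) x) ↔
      ∀ p : ℕ, ∀ K : ℝ, 0 < K → ∃ A ∈ 𝒜, (∀ n ∈ A, p ≤ n) ∧
        Tendsto (fun n => ‖weightProd w n‖) (atTop ⊓ 𝓟 A) atTop ∧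
        ∀ n ∈ A, ∀ m ∈ A, m < n → K < ‖weightProd w (n - m + p)‖ := by
  refine ⟨fun ⟨x, hx⟩ p K _ => hB.exists_mem_of_aUniv hw h hufi hx p K, fun hA => ?_⟩
  have := NullSeq.separableSpace (E := 𝕜)
  have := UniformSpace.secondCountable_of_separable C₀(ℕ, 𝕜)
  have hw_le : ∀ n, ‖w (n + 1)‖ ≤ max 1 ‖B‖ := fun n =>
    (hB.norm_weight_le_opNorm n).trans (le_max_right _ _)
  have hreturn : ∀ V : Set C₀(ℕ, 𝕜), IsOpen V → V.Nonempty → ∃ y, {n | B^[n] y ∈ V} ∈ 𝒜 :=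
    fun _ => hB.exists_return_times_mem hw (le_max_left _ _) hw_le h fun p K hK =>
      (hA p K hK).imp fun _ hAK => ⟨hAK.1, hAK.2.2⟩
  have hdense : Dense {x | AUniv 𝒜 (fun n => B^[n]) x} :=
    h.dense_aUniv_iterate_of_dense_eventually_eq_zero hufi B.continuous
      hB.dense_eventually_iterate_eq_zero hreturn
  exact hdense.nonempty

/-- Characterization of `𝒜`-hypercyclic weighted backward shifts on `c₀` for u.f.i. upper
Furstenberg families: for a bounded sequence `w` of nonzero scalars, the weighted backward
shift `B_w` (given as the continuous linear operator `Bw` with `(Bw x) n = w (n+1) * x (n+1)`)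
is `𝒜`-hypercyclic on `c₀` iff for any `p ≥ 0` and `M > 0` there is `A ∈ 𝒜` with
`A ⊆ [p,∞)` such that (i) `|w₁ ⋯ w_n| → ∞` as `n → ∞` along `A`, and (ii) for any
`n, m ∈ A` with `n > m`, `|w₁ ⋯ w_{n-m+p}| > M`. -/
theorem weightedShift_AHypercyclic_iff_c₀ {𝕜 : Type*} [RCLike 𝕜]
    (w : ℕ → 𝕜) (hw0 : ∀ n, w n ≠ 0) (hwb : ∃ C : ℝ, ∀ n, ‖w n‖ ≤ C)
    (Bw : C₀(ℕ, 𝕜) →L[𝕜] C₀(ℕ, 𝕜))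
    (hBw : ∀ (x : C₀(ℕ, 𝕜)) (n : ℕ), Bw x n = w (n + 1) * x (n + 1))
    {D M : Type*} (𝒜 : Set (Set ℕ)) (Adm : D → M → Set (Set ℕ))
    (hA : IsUpperFurstenberg 𝒜 Adm) (hufi : UFI 𝒜 Adm) :
    (∃ x, AUniv 𝒜 (fun n => (⇑Bw)^[n]) x) ↔
      ∀ p : ℕ, ∀ Mc : ℝ, 0 < Mc → ∃ A ∈ 𝒜, (∀ n ∈ A, p ≤ n) ∧
        Filter.Tendsto (fun n : ℕ => ‖∏ ν ∈ Finset.Icc 1 n, w ν‖)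
          (Filter.atTop ⊓ Filter.principal A) Filter.atTop ∧
        (∀ n ∈ A, ∀ m ∈ A, m < n → Mc < ‖∏ ν ∈ Finset.Icc 1 (n - m + p), w ν‖) :=
  weightedShift_AHypercyclic_iff_c₀_general (fun n _ => hw0 n) hBw hA hufi
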